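/- arXiv:1309.1984 — 3 statements merged into one kernel-verified Lean document; each statement's English description precedes it below -/
import Mathlib

section
/- Let (M,ω) be a multisymplectic manifold of degree k+1, and let α₁ ∈ Ω^{k−q₁}(T*M), α₂ ∈ Ω^{k−q₂}(T*M) be Hamiltonian forms with associated Hamiltonian multivector fields Q₁ ∈ Ω^{q₁}(TM), Q₂ ∈ Ω^{q₂}(TM), such that q₁ + q₂ = k+1. Then {α₁,α₂} = 0 if and only if L_{Q₂}α₁ = 0 (and, symmetrically, if and only if L_{Q₁}α₂ = 0). In fact, under these hypotheses {α₁,α₂} = (−1)^{q₁+q₂+1} L_{Q₂}α₁. -/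
/-!
STATEMENT 1: Let `(M, ω)` be a multisymplectic manifold of degree `k+1`, and let
`α₁ ∈ Ω^{k−q₁}(T*M)`, `α₂ ∈ Ω^{k−q₂}(T*M)` be Hamiltonian forms with associated
Hamiltonian multivector fields `Q₁ ∈ Ω^{q₁}(TM)`, `Q₂ ∈ Ω^{q₂}(TM)`, such that
`q₁ + q₂ = k + 1`.  Then `{α₁, α₂} = 0` iff `L_{Q₂} α₁ = 0` (and, symmetrically, iff
`L_{Q₁} α₂ = 0`).  In fact, under these hypotheses
`{α₁, α₂} = (−1)^{q₁+q₂+1} L_{Q₂} α₁`.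
-/


/-- An abstract context for the calculus of smooth multivector fields and differential
forms on a smooth manifold `M`: `Form` is the space `Ω(T*M) = ⊕_l Ω^l(T*M)` of
differential forms, `MVF` the space `Ω(TM) = ⊕_q Ω^q(TM)` of multivector fields, with the
homogeneous pieces recorded by the submodule families `formOfDeg` and `mvfOfDeg`, together
with the exterior derivative `d`, the contraction `⌟` of a form by a multivector field
(`(X₁ ∧ ⋯ ∧ X_q) ⌟ α = X_q ⌟ ⋯ ⌟ X₁ ⌟ α`, extended linearly), the wedge product of
multivector fields, and the Schouten–Nijenhuis bracket `sn`, subject to their standard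
properties (the Lie derivative along a `q`-multivector field `Q` being
`L_Q α = Q ⌟ dα − (−1)^q d(Q ⌟ α)`). -/
structure MultiCtx (Form MVF : Type*) [AddCommGroup Form] [Module ℝ Form]
    [AddCommGroup MVF] [Module ℝ MVF] where
  /-- the homogeneous differential `l`-forms `Ω^l(T*M)` -/
  formOfDeg : ℕ → Submodule ℝ Form
  /-- the homogeneous `q`-multivector fields `Ω^q(TM)` -/
  mvfOfDeg : ℕ → Submodule ℝ MVF
  /-- the exterior derivative -/
  d : Form →ₗ[ℝ] Form
  /-- contraction `Q ⌟ α` of a form by a multivector field -/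
  contr : MVF →ₗ[ℝ] Form →ₗ[ℝ] Form
  /-- the wedge product of multivector fields -/
  wedge : MVF →ₗ[ℝ] MVF →ₗ[ℝ] MVF
  /-- the Schouten–Nijenhuis bracket -/
  sn : MVF → MVF → MVF
  d_mem : ∀ {l : ℕ} {α : Form}, α ∈ formOfDeg l → d α ∈ formOfDeg (l + 1)
  d_d : ∀ α : Form, d (d α) = 0
  contr_mem : ∀ {q l : ℕ} {Q : MVF} {α : Form}, Q ∈ mvfOfDeg q → α ∈ formOfDeg l →
    contr Q α ∈ formOfDeg (l - q)
  /-- contraction of an `l`-form by a `q`-multivector field vanishes when `q > l` -/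
  contr_zero : ∀ {q l : ℕ} {Q : MVF} {α : Form}, Q ∈ mvfOfDeg q → α ∈ formOfDeg l →
    l < q → contr Q α = 0
  wedge_mem : ∀ {a b : ℕ} {Q R : MVF}, Q ∈ mvfOfDeg a → R ∈ mvfOfDeg b →
    wedge Q R ∈ mvfOfDeg (a + b)
  /-- graded commutativity `R ∧ Q = (−1)^{ab} Q ∧ R` -/
  wedge_comm : ∀ {a b : ℕ} {Q R : MVF}, Q ∈ mvfOfDeg a → R ∈ mvfOfDeg b →
    wedge R Q = ((-1 : ℝ) ^ (a * b)) • wedge Q R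
  /-- `(Q ∧ R) ⌟ α = R ⌟ (Q ⌟ α)` -/
  contr_wedge : ∀ (Q R : MVF) (α : Form), contr (wedge Q R) α = contr R (contr Q α)
  sn_mem : ∀ {a b : ℕ} {Q R : MVF}, Q ∈ mvfOfDeg a → R ∈ mvfOfDeg b →
    sn Q R ∈ mvfOfDeg (a + b - 1)
  /-- `[Q, R] ⌟ α = (−1)^{ab+b} L_Q (R ⌟ α) − R ⌟ L_Q α` for `Q` of degree `a` and `R` of
  degree `b` -/
  sn_contr : ∀ {a b : ℕ} {Q R : MVF}, Q ∈ mvfOfDeg a → R ∈ mvfOfDeg b → ∀ α : Form,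
    contr (sn Q R) α
      = ((-1 : ℝ) ^ (a * b + b)) •
          (contr Q (d (contr R α)) - ((-1 : ℝ) ^ a) • d (contr Q (contr R α)))
        - contr R (contr Q (d α) - ((-1 : ℝ) ^ a) • d (contr Q α))

variable {Form MVF : Type*} [AddCommGroup Form] [Module ℝ Form]
  [AddCommGroup MVF] [Module ℝ MVF]

/-- The Lie derivative `L_Q α = Q ⌟ dα − (−1)^q d(Q ⌟ α)` of a differential form along a
`q`-multivector field. -/
def MultiCtx.lie (C : MultiCtx Form MVF) (q : ℕ) (Q : MVF) (α : Form) : Form :=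
  C.contr Q (C.d α) - ((-1 : ℝ) ^ q) • C.d (C.contr Q α)

/-- `ω` is a multisymplectic form of degree `k + 1`: a closed `(k+1)`-form which is
nondegenerate in the sense that `X ⌟ ω = 0` implies `X = 0` for vector fields `X`. -/
def MultiCtx.IsMultisymplectic (C : MultiCtx Form MVF) (k : ℕ) (ω : Form) : Prop :=
  ω ∈ C.formOfDeg (k + 1) ∧ C.d ω = 0 ∧
    ∀ X ∈ C.mvfOfDeg 1, C.contr X ω = 0 → X = 0

/-- `Q` is a Hamiltonian `q`-multivector field with Hamiltonian `l`-form `α` (for the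
multisymplectic form `ω`): `Q ⌟ ω = dα`. -/
def MultiCtx.IsHamiltonianPair (C : MultiCtx Form MVF) (ω : Form) (q l : ℕ)
    (Q : MVF) (α : Form) : Prop :=
  Q ∈ C.mvfOfDeg q ∧ α ∈ C.formOfDeg l ∧ C.contr Q ω = C.d α

/-- The bracket `{α₁, α₂} = (−1)^{q₁+q₂+1} (Q₁ ∧ Q₂) ⌟ ω` of Hamiltonian forms, expressed
through the associated Hamiltonian multivector fields `Q₁, Q₂` of degrees `q₁, q₂`. -/
def MultiCtx.bracket (C : MultiCtx Form MVF) (ω : Form) (q₁ q₂ : ℕ) (Q₁ Q₂ : MVF) : Form :=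
  ((-1 : ℝ) ^ (q₁ + q₂ + 1)) • C.contr (C.wedge Q₁ Q₂) ω

/-!
A Hamiltonian form `α₁` of degree `k - q₁ = q₂ - 1` is killed by contraction with the
`q₂`-multivector field `Q₂`, so the second term of `L_{Q₂} α₁` disappears and
`L_{Q₂} α₁ = Q₂ ⌟ dα₁ = Q₂ ⌟ (Q₁ ⌟ ω) = (Q₁ ∧ Q₂) ⌟ ω`, which is the bracket up to sign.
Exchanging the two arguments changes the bracket only by the sign `(-1)^{q₁q₂}`.
-/

namespace MultiCtx

variable {C : MultiCtx Form MVF} {ω α α₁ : Form} {Q Q₁ Q₂ : MVF} {q q₁ q₂ l l₁ : ℕ}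

theorem lie_eq_contr_d_of_lt (hQ : Q ∈ C.mvfOfDeg q) (hα : α ∈ C.formOfDeg l) (hlq : l < q) :
    C.lie q Q α = C.contr Q (C.d α) := by
  rw [lie, C.contr_zero hQ hα hlq, map_zero, smul_zero, sub_zero]

theorem IsHamiltonianPair.lie_eq_contr_wedge (h₁ : C.IsHamiltonianPair ω q₁ l₁ Q₁ α₁)
    (hQ₂ : Q₂ ∈ C.mvfOfDeg q₂) (hlq : l₁ < q₂) :
    C.lie q₂ Q₂ α₁ = C.contr (C.wedge Q₁ Q₂) ω := by
  obtain ⟨-, hα₁, hdα₁⟩ := h₁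
  rw [lie_eq_contr_d_of_lt hQ₂ hα₁ hlq, ← hdα₁, C.contr_wedge]

theorem IsHamiltonianPair.bracket_eq_smul_lie (h₁ : C.IsHamiltonianPair ω q₁ l₁ Q₁ α₁)
    (hQ₂ : Q₂ ∈ C.mvfOfDeg q₂) (hlq : l₁ < q₂) :
    C.bracket ω q₁ q₂ Q₁ Q₂ = ((-1 : ℝ) ^ (q₁ + q₂ + 1)) • C.lie q₂ Q₂ α₁ := by
  rw [bracket, h₁.lie_eq_contr_wedge hQ₂ hlq]

theorem IsHamiltonianPair.bracket_eq_zero_iff (h₁ : C.IsHamiltonianPair ω q₁ l₁ Q₁ α₁)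
    (hQ₂ : Q₂ ∈ C.mvfOfDeg q₂) (hlq : l₁ < q₂) :
    C.bracket ω q₁ q₂ Q₁ Q₂ = 0 ↔ C.lie q₂ Q₂ α₁ = 0 := by
  simp [h₁.bracket_eq_smul_lie hQ₂ hlq]

theorem bracket_swap (hQ₁ : Q₁ ∈ C.mvfOfDeg q₁) (hQ₂ : Q₂ ∈ C.mvfOfDeg q₂) :
    C.bracket ω q₂ q₁ Q₂ Q₁ = ((-1 : ℝ) ^ (q₁ * q₂)) • C.bracket ω q₁ q₂ Q₁ Q₂ := by
  rw [bracket, bracket, C.wedge_comm hQ₁ hQ₂, map_smul, LinearMap.smul_apply, smul_comm,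
    add_comm q₂ q₁]

theorem bracket_swap_eq_zero_iff (hQ₁ : Q₁ ∈ C.mvfOfDeg q₁) (hQ₂ : Q₂ ∈ C.mvfOfDeg q₂) :
    C.bracket ω q₂ q₁ Q₂ Q₁ = 0 ↔ C.bracket ω q₁ q₂ Q₁ Q₂ = 0 := by
  simp [bracket_swap hQ₁ hQ₂]

end MultiCtx

theorem bracket_eq_zero_iff_lie_eq_zero_general
    {C : MultiCtx Form MVF} {q₁ q₂ l₁ l₂ : ℕ} {ω : Form} {Q₁ Q₂ : MVF} {α₁ α₂ : Form}
    (h₁ : C.IsHamiltonianPair ω q₁ l₁ Q₁ α₁) (h₂ : C.IsHamiltonianPair ω q₂ l₂ Q₂ α₂)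
    (hlq₁ : l₁ < q₂) (hlq₂ : l₂ < q₁) :
    C.bracket ω q₁ q₂ Q₁ Q₂ = ((-1 : ℝ) ^ (q₁ + q₂ + 1)) • C.lie q₂ Q₂ α₁ ∧
    (C.bracket ω q₁ q₂ Q₁ Q₂ = 0 ↔ C.lie q₂ Q₂ α₁ = 0) ∧
    (C.bracket ω q₁ q₂ Q₁ Q₂ = 0 ↔ C.lie q₁ Q₁ α₂ = 0) := by
  have hQ₁ : Q₁ ∈ C.mvfOfDeg q₁ := h₁.1
  have hQ₂ : Q₂ ∈ C.mvfOfDeg q₂ := h₂.1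
  exact ⟨h₁.bracket_eq_smul_lie hQ₂ hlq₁, h₁.bracket_eq_zero_iff hQ₂ hlq₁,
    (MultiCtx.bracket_swap_eq_zero_iff hQ₁ hQ₂).symm.trans (h₂.bracket_eq_zero_iff hQ₁ hlq₂)⟩

theorem bracket_eq_zero_iff_lie_eq_zero
    (C : MultiCtx Form MVF) (k q₁ q₂ l₁ l₂ : ℕ) (ω : Form)
    (hω : C.IsMultisymplectic k ω)
    (hq₁ : 1 ≤ q₁) (hq₂ : 1 ≤ q₂) (hl₁ : q₁ + l₁ = k) (hl₂ : q₂ + l₂ = k)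
    (Q₁ Q₂ : MVF) (α₁ α₂ : Form)
    (h₁ : C.IsHamiltonianPair ω q₁ l₁ Q₁ α₁)
    (h₂ : C.IsHamiltonianPair ω q₂ l₂ Q₂ α₂)
    (hsum : q₁ + q₂ = k + 1) :
    C.bracket ω q₁ q₂ Q₁ Q₂ = ((-1 : ℝ) ^ (q₁ + q₂ + 1)) • C.lie q₂ Q₂ α₁ ∧
    (C.bracket ω q₁ q₂ Q₁ Q₂ = 0 ↔ C.lie q₂ Q₂ α₁ = 0) ∧
    (C.bracket ω q₁ q₂ Q₁ Q₂ = 0 ↔ C.lie q₁ Q₁ α₂ = 0) :=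
  bracket_eq_zero_iff_lie_eq_zero_general h₁ h₂ (by omega) (by omega)
end

section
/- Let (M,ω) be a multisymplectic manifold of degree k+1 and let Q₁ ∈ Ω^{q₁}(TM), Q₂ ∈ Ω^{q₂}(TM) be locally Hamiltonian multivector fields (i.e. d(Q₁⌟ω) = 0 and d(Q₂⌟ω) = 0). Then the Schouten–Nijenhuis bracket satisfies [Q₁,Q₂]⌟ω = (−1)^{q₁+q₂+1} d((Q₁∧Q₂)⌟ω); in particular [Q₁,Q₂] is a Hamiltonian (q₁+q₂−1)-multivector field. -/
variable {Form MVF : Type*} [AddCommGroup Form] [Module ℝ Form]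
  [AddCommGroup MVF] [Module ℝ MVF]

/-!
If `L_Q ω = 0`, the formula for `[Q, R] ⌟ ω` reduces to `(−1)^{ab+b} L_Q (R ⌟ ω)`, and if moreover
`R ⌟ ω` is closed, only the exact term `−(−1)^a d(Q ⌟ (R ⌟ ω))` of this Lie derivative survives.
Interchanging the two contractions gives a second factor `(−1)^{ab}`, which cancels the first.
-/

namespace MultiCtx

variable (C : MultiCtx Form MVF) {a b : ℕ} {Q R : MVF} {α ω : Form}

theorem contr_contr_eq_smul_contr_wedge (hQ : Q ∈ C.mvfOfDeg a) (hR : R ∈ C.mvfOfDeg b)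
    (α : Form) :
    C.contr Q (C.contr R α) = ((-1 : ℝ) ^ (a * b)) • C.contr (C.wedge Q R) α := by
  rw [← C.contr_wedge R Q, C.wedge_comm hQ hR, map_smul, LinearMap.smul_apply]

theorem lie_of_d_eq_zero (a : ℕ) (Q : MVF) (hα : C.d α = 0) :
    C.lie a Q α = -(((-1 : ℝ) ^ a) • C.d (C.contr Q α)) := by
  rw [lie, hα, map_zero, zero_sub]

theorem lie_eq_zero_of_d_eq_zero (a : ℕ) (hα : C.d α = 0) (hQα : C.d (C.contr Q α) = 0) :
    C.lie a Q α = 0 := by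
  rw [C.lie_of_d_eq_zero a Q hα, hQα, smul_zero, neg_zero]

theorem contr_sn_eq_lie_commutator (hQ : Q ∈ C.mvfOfDeg a) (hR : R ∈ C.mvfOfDeg b) (α : Form) :
    C.contr (C.sn Q R) α
      = ((-1 : ℝ) ^ (a * b + b)) • C.lie a Q (C.contr R α) - C.contr R (C.lie a Q α) :=
  C.sn_contr hQ hR α

theorem contr_sn_of_lie_eq_zero (hQ : Q ∈ C.mvfOfDeg a) (hR : R ∈ C.mvfOfDeg b)
    (hQω : C.lie a Q ω = 0) (hRω : C.d (C.contr R ω) = 0) :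
    C.contr (C.sn Q R) ω = ((-1 : ℝ) ^ (a + b + 1)) • C.d (C.contr (C.wedge Q R) ω) := by
  have hsign : (-1 : ℝ) ^ (a * b + b) * -((-1 : ℝ) ^ a * (-1 : ℝ) ^ (a * b))
      = (-1 : ℝ) ^ (a + b + 1) := by
    have hsq : (-1 : ℝ) ^ (a * b) * (-1 : ℝ) ^ (a * b) = 1 := pow_mul_pow_eq_one _ (by norm_num)
    calc (-1 : ℝ) ^ (a * b + b) * -((-1 : ℝ) ^ a * (-1 : ℝ) ^ (a * b))
        = (-1 : ℝ) ^ (a + b + 1) * ((-1 : ℝ) ^ (a * b) * (-1 : ℝ) ^ (a * b)) := by ring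
      _ = (-1 : ℝ) ^ (a + b + 1) := by rw [hsq, mul_one]
  calc C.contr (C.sn Q R) ω
      = ((-1 : ℝ) ^ (a * b + b)) • C.lie a Q (C.contr R ω) := by
        rw [C.contr_sn_eq_lie_commutator hQ hR, hQω, map_zero, sub_zero]
    _ = ((-1 : ℝ) ^ (a * b + b)) • -(((-1 : ℝ) ^ a) • C.d (C.contr Q (C.contr R ω))) := by
        rw [C.lie_of_d_eq_zero a Q hRω]
    _ = ((-1 : ℝ) ^ (a * b + b) * -((-1 : ℝ) ^ a * (-1 : ℝ) ^ (a * b))) •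
          C.d (C.contr (C.wedge Q R) ω) := by
        rw [C.contr_contr_eq_smul_contr_wedge hQ hR, map_smul, smul_smul, ← neg_smul, smul_smul]
    _ = ((-1 : ℝ) ^ (a + b + 1)) • C.d (C.contr (C.wedge Q R) ω) := by rw [hsign]

theorem bracket_mem {l : ℕ} (hω : ω ∈ C.formOfDeg l) (hQ : Q ∈ C.mvfOfDeg a)
    (hR : R ∈ C.mvfOfDeg b) : C.bracket ω a b Q R ∈ C.formOfDeg (l - (a + b)) :=
  Submodule.smul_mem _ _ (C.contr_mem (C.wedge_mem hQ hR) hω)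

theorem d_bracket (ω : Form) (a b : ℕ) (Q R : MVF) :
    C.d (C.bracket ω a b Q R) = ((-1 : ℝ) ^ (a + b + 1)) • C.d (C.contr (C.wedge Q R) ω) :=
  map_smul C.d _ _

end MultiCtx

/-- Calling the degree of `[Q₁, Q₂]` `r` leaves out `q₁ = q₂ = 0`, where `q₁ + q₂ - 1` would be
truncated; `l - (q₁ + q₂)` is truncated only where `(Q₁ ∧ Q₂) ⌟ ω = 0`. -/
theorem schouten_of_locally_hamiltonian_general
    (C : MultiCtx Form MVF) {l q₁ q₂ r : ℕ} (hr : q₁ + q₂ = r + 1) {ω : Form}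
    (hω : ω ∈ C.formOfDeg l) {Q₁ Q₂ : MVF} (hQ₁ : Q₁ ∈ C.mvfOfDeg q₁) (hQ₂ : Q₂ ∈ C.mvfOfDeg q₂)
    (hlie : C.lie q₁ Q₁ ω = 0) (hclosed : C.d (C.contr Q₂ ω) = 0) :
    C.contr (C.sn Q₁ Q₂) ω
        = ((-1 : ℝ) ^ (q₁ + q₂ + 1)) • C.d (C.contr (C.wedge Q₁ Q₂) ω) ∧
    C.IsHamiltonianPair ω r (l - (q₁ + q₂)) (C.sn Q₁ Q₂) (C.bracket ω q₁ q₂ Q₁ Q₂) := by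
  have hcontr := C.contr_sn_of_lie_eq_zero hQ₁ hQ₂ hlie hclosed
  have hdeg : C.sn Q₁ Q₂ ∈ C.mvfOfDeg r := by
    simpa only [hr, Nat.add_sub_cancel] using C.sn_mem hQ₁ hQ₂
  exact ⟨hcontr, hdeg, C.bracket_mem hω hQ₁ hQ₂, hcontr.trans (C.d_bracket ω q₁ q₂ Q₁ Q₂).symm⟩

theorem schouten_of_locally_hamiltonian
    (C : MultiCtx Form MVF) (k q₁ q₂ : ℕ) (ω : Form)
    (hω : C.IsMultisymplectic k ω)
    (hq₁ : 1 ≤ q₁) (hq₂ : 1 ≤ q₂)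
    (Q₁ Q₂ : MVF) (hQ₁ : Q₁ ∈ C.mvfOfDeg q₁) (hQ₂ : Q₂ ∈ C.mvfOfDeg q₂)
    (hlH₁ : C.d (C.contr Q₁ ω) = 0) (hlH₂ : C.d (C.contr Q₂ ω) = 0) :
    C.contr (C.sn Q₁ Q₂) ω
        = ((-1 : ℝ) ^ (q₁ + q₂ + 1)) • C.d (C.contr (C.wedge Q₁ Q₂) ω) ∧
    C.sn Q₁ Q₂ ∈ C.mvfOfDeg (q₁ + q₂ - 1) ∧
    ∃ β ∈ C.formOfDeg (k + 1 - (q₁ + q₂)), C.contr (C.sn Q₁ Q₂) ω = C.d β := by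
  have ⟨hcontr, hdeg, hβ, hdβ⟩ := schouten_of_locally_hamiltonian_general C (r := q₁ + q₂ - 1)
    (by lia) hω.1 hQ₁ hQ₂ (C.lie_eq_zero_of_d_eq_zero q₁ hω.2.1 hlH₁) hlH₂
  exact ⟨hcontr, hdeg, _, hβ, hdβ⟩
end

section
/- The linear map Λ²(ℝ⁷) → Λ²((ℝ⁷)*) sending a 2-multivector Q to the 2-form Q⌟⋆φ₀ is a bijection. Explicitly, writing Λ²((ℝ⁷)*) = Λ²₇ ⊕ Λ²₁₄ where Λ²₇ = {β : ⋆(φ₀∧β) = 2β} and Λ²₁₄ = {β : ⋆(φ₀∧β) = −β}, every 2-form β = β₇ + β₁₄ equals ((1/2)β₇^♯ − β₁₄^♯)⌟⋆φ₀, where ♯ is the Euclidean metric isomorphism from 2-forms to 2-multivectors. -/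
/-!
STATEMENT 11: The linear map `Λ²(ℝ⁷) → Λ²((ℝ⁷)*)`, `Q ↦ Q ⌟ ⋆φ₀`, is a bijection.
Explicitly, writing `Λ²((ℝ⁷)*) = Λ²₇ ⊕ Λ²₁₄` where `Λ²₇ = {β : ⋆(φ₀ ∧ β) = 2β}` and
`Λ²₁₄ = {β : ⋆(φ₀ ∧ β) = −β}`, every 2-form `β = β₇ + β₁₄` equals
`((1/2) β₇♯ − β₁₄♯) ⌟ ⋆φ₀`, where `♯` is the Euclidean metric isomorphism from 2-forms to
2-multivectors.

Here 2-multivectors `Q = Σ_{i<j} a i j • eᵢ ∧ eⱼ` are represented by antisymmetric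
coefficient matrices `a`; the operator `β ↦ ⋆(φ₀ ∧ β)` is written out via the standard
coordinate formulas for the wedge product and the Euclidean Hodge star:
`⋆γ = (1/(5!·2!)) Σ_{σ ∈ S₇} sgn σ · γ(e_{σ1}, …, e_{σ5}) e^{σ6} ∧ e^{σ7}` for a 5-form `γ`
and `(φ₀ ∧ β)(v₁, …, v₅) = (1/(3!·2!)) Σ_{τ ∈ S₅} sgn τ · φ₀(v_{τ1}, v_{τ2}, v_{τ3}) β(v_{τ4}, v_{τ5})`.
-/

noncomputable section

open scoped BigOperators Matrix

/-- `ℝ⁷`. -/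
abbrev V7 : Type := Fin 7 → ℝ

/-- The basis exterior `k`-form `e^{i₁ ⋯ i_k}` on `ℝ⁷`. -/
def eForm {k : ℕ} (idx : Fin k → Fin 7) : AlternatingMap ℝ V7 ℝ (Fin k) :=
  (Matrix.detRowAlternating (R := ℝ) (n := Fin k)).compLinearMap
    (LinearMap.pi fun t => LinearMap.proj (idx t))

/-- The standard `G₂` 3-form `φ₀` (0-based indices). -/
def phi0 : AlternatingMap ℝ V7 ℝ (Fin 3) :=
  eForm ![0, 1, 2] + eForm ![0, 3, 4] + eForm ![0, 5, 6] + eForm ![1, 3, 5]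
    - eForm ![1, 4, 6] - eForm ![2, 3, 6] - eForm ![2, 4, 5]

/-- The Hodge dual 4-form `⋆φ₀` (0-based indices). -/
def psi0 : AlternatingMap ℝ V7 ℝ (Fin 4) :=
  eForm ![3, 4, 5, 6] + eForm ![1, 2, 5, 6] + eForm ![1, 2, 3, 4] + eForm ![0, 2, 4, 6]
    - eForm ![0, 2, 3, 5] - eForm ![0, 1, 4, 5] - eForm ![0, 1, 3, 6]

/-- The `i`-th standard basis vector of `ℝ⁷`. -/
def e7 (i : Fin 7) : V7 := Pi.single i 1

/-- Contraction `Q ⌟ α` of an `(l+2)`-form `α` by the 2-multivector with antisymmetric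
coefficient matrix `a`; `(X ∧ Y) ⌟ α = Y ⌟ X ⌟ α = α (X, Y, ·, …, ·)`. -/
def contr2 {l : ℕ} (a : Matrix (Fin 7) (Fin 7) ℝ) (α : AlternatingMap ℝ V7 ℝ (Fin (l + 2))) :
    AlternatingMap ℝ V7 ℝ (Fin l) :=
  (1 / 2 : ℝ) • ∑ i : Fin 7, ∑ j : Fin 7, a i j • ((α.curryLeft (e7 i)).curryLeft (e7 j))

/-- The space `Λ²(ℝ⁷)` of 2-multivectors on `ℝ⁷`, realized as antisymmetric `7 × 7` real
matrices (`a i j` is the coefficient of `eᵢ ∧ eⱼ`). -/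
def skew7 : Submodule ℝ (Matrix (Fin 7) (Fin 7) ℝ) where
  carrier := {a | aᵀ = -a}
  add_mem' := by
    intro a b ha hb
    simp only [Set.mem_setOf_eq] at *
    rw [Matrix.transpose_add, ha, hb, neg_add]
  zero_mem' := by simp
  smul_mem' := by
    intro c a ha
    simp only [Set.mem_setOf_eq] at *
    rw [Matrix.transpose_smul, ha, smul_neg]

/-- The Euclidean musical isomorphism `♯` from 2-forms to 2-multivectors: `β♯` has
coefficient matrix `(β (eᵢ, eⱼ))ᵢⱼ`. -/
def sharp2 (β : AlternatingMap ℝ V7 ℝ (Fin 2)) : Matrix (Fin 7) (Fin 7) ℝ :=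
  Matrix.of fun i j => β ![e7 i, e7 j]

/-- The evaluation `(φ₀ ∧ β)(v₁, …, v₅)` of the wedge product of `φ₀` with a 2-form `β`. -/
def phiWedgeEval (β : AlternatingMap ℝ V7 ℝ (Fin 2)) (v : Fin 5 → V7) : ℝ :=
  (1 / 12 : ℝ) * ∑ τ : Equiv.Perm (Fin 5), ((Equiv.Perm.sign τ : ℤ) : ℝ) *
    (phi0 ![v (τ 0), v (τ 1), v (τ 2)]) * (β ![v (τ 3), v (τ 4)])

/-- The 2-form `⋆(φ₀ ∧ β)`, via the coordinate formula for the Euclidean Hodge star of the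
5-form `φ₀ ∧ β`. -/
def starPhiWedge (β : AlternatingMap ℝ V7 ℝ (Fin 2)) : AlternatingMap ℝ V7 ℝ (Fin 2) :=
  (1 / 240 : ℝ) • ∑ σ : Equiv.Perm (Fin 7),
    (((Equiv.Perm.sign σ : ℤ) : ℝ) *
        phiWedgeEval β (fun t : Fin 5 => e7 (σ (Fin.castLE (by omega) t)))) •
      eForm ![σ 5, σ 6]

/-!
For a vector `v` put `ι v = v ⌟ φ₀`, and for a 2-form `β` let `X β` be the vector dual to `β♯ ⌟ φ₀`.
The cross product `⟨x × y, z⟩ = φ₀ (x, y, z)` satisfies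
`⟨x × y, z × w⟩ = ⟨x, z⟩⟨y, w⟩ - ⟨x, w⟩⟨y, z⟩ + ⋆φ₀ (x, y, z, w)`.
Pairing this identity with `β♯` gives `β♯ ⌟ ⋆φ₀ = ι (X β) - β`, and its trace gives `X (ι v) = 3 v`.
On the other hand `⋆(φ₀ ∧ β) = β♯ ⌟ ⋆φ₀` for every 2-form: writing both stars as sums over
permutations of the indices, the inner antisymmetrization of `φ₀ ∧ β` can be dropped.
So `T β = ⋆(φ₀ ∧ β)` satisfies `T = ι X - 1` and `T² = T + 2`, which gives the inverse `(T - 1) / 2`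
of `T`, and the projections `(T + 1) / 3` and `(2 - T) / 3` onto `Λ²₇` and `Λ²₁₄`.
-/

section AlternatingSums

open Equiv

variable {ι κ α R : Type*} [Fintype α] [DecidableEq α] [CommRing R]

lemma sum_sign_mul_alternating_inl [Fintype ι] [DecidableEq ι] (e : ι ⊕ κ ≃ α)
    (A : (ι → α) → R) (B : (κ → α) → R) :
    ∑ σ : Perm α, ((Perm.sign σ : ℤ) : R) *
      ((∑ τ : Perm ι, ((Perm.sign τ : ℤ) : R) * A fun i => σ (e (Sum.inl (τ i)))) *
        B fun j => σ (e (Sum.inr j))) =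
    ((Fintype.card ι).factorial : R) * ∑ σ : Perm α, ((Perm.sign σ : ℤ) : R) *
      (A (fun i => σ (e (Sum.inl i))) * B fun j => σ (e (Sum.inr j))) := by
  classical
  have : Fintype κ := Fintype.ofInjective (e ∘ Sum.inr) (e.injective.comp Sum.inr_injective)
  have collapse (τ : Perm ι) :
      ∑ σ : Perm α, ((Perm.sign σ : ℤ) : R) * (((Perm.sign τ : ℤ) : R) *
        A (fun i => σ (e (Sum.inl (τ i)))) * B fun j => σ (e (Sum.inr j))) =
      ∑ σ : Perm α, ((Perm.sign σ : ℤ) : R) *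
        (A (fun i => σ (e (Sum.inl i))) * B fun j => σ (e (Sum.inr j))) := by
    refine Fintype.sum_equiv (Equiv.mulRight (e.permCongr (Perm.sumCongr τ 1))) _ _ fun σ => ?_
    simp [Perm.sign_permCongr, Perm.sign_sumCongr, mul_assoc]
  simp only [Finset.sum_mul, Finset.mul_sum]
  rw [Finset.sum_comm]
  simp only [collapse, Finset.sum_const, Finset.card_univ, Fintype.card_perm, nsmul_eq_mul,
    ← Finset.mul_sum]

lemma sum_sign_mul_alternating_inr [Fintype κ] [DecidableEq κ] (e : ι ⊕ κ ≃ α)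
    (A : (ι → α) → R) (B : (κ → α) → R) :
    ∑ σ : Perm α, ((Perm.sign σ : ℤ) : R) * (A (fun i => σ (e (Sum.inl i))) *
      ∑ τ : Perm κ, ((Perm.sign τ : ℤ) : R) * B fun j => σ (e (Sum.inr (τ j)))) =
    ((Fintype.card κ).factorial : R) * ∑ σ : Perm α, ((Perm.sign σ : ℤ) : R) *
      (A (fun i => σ (e (Sum.inl i))) * B fun j => σ (e (Sum.inr j))) := by
  simpa [mul_comm] using sum_sign_mul_alternating_inl ((Equiv.sumComm κ ι).trans e) B A

lemma sum_sign_mul_prod_single_mul_prod [Fintype ι] [Fintype κ] [DecidableEq κ]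
    (e : ι ⊕ κ ≃ α) (ρ : Perm α) (x : κ → α → R) :
    ∑ σ : Perm α, ((Perm.sign σ : ℤ) : R) *
      ((∏ i, (Pi.single (σ (e (Sum.inl i))) 1 : α → R) (ρ (e (Sum.inl i)))) *
        ∏ j, x j (σ (e (Sum.inr j)))) =
    ((Perm.sign ρ : ℤ) : R) * (Matrix.of fun j k => x j (ρ (e (Sum.inr k)))).det := by
  classical
  let M : Matrix α α R := Matrix.of fun a c =>
    Sum.elim (fun i => (Pi.single a 1 : α → R) (ρ (e (Sum.inl i)))) (fun j => x j a) (e.symm c)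
  have det_eq_sum : M.det = ∑ σ : Perm α, ((Perm.sign σ : ℤ) : R) *
      ((∏ i, (Pi.single (σ (e (Sum.inl i))) 1 : α → R) (ρ (e (Sum.inl i)))) *
        ∏ j, x j (σ (e (Sum.inr j)))) := by
    simp [Matrix.det_apply', ← e.prod_comp, Fintype.prod_sum_type, M]
  have blocks : (M.submatrix ρ id).submatrix e e = Matrix.fromBlocks 1
      (Matrix.of fun i j => x j (ρ (e (Sum.inl i)))) 0
      (Matrix.of fun j k => x j (ρ (e (Sum.inr k))))ᵀ := by
    ext (i | i) (j | j) <;>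
      simp [M, Matrix.one_apply, Pi.single_apply, eq_comm]
  have det_rows : (Matrix.of fun j k => x j (ρ (e (Sum.inr k)))).det =
      ((Perm.sign ρ : ℤ) : R) * M.det := by
    rw [← Matrix.det_permute, ← Matrix.det_submatrix_equiv_self e, blocks,
      Matrix.det_fromBlocks_zero₂₁, Matrix.det_one, one_mul, Matrix.det_transpose]
  rw [← det_eq_sum, det_rows, ← mul_assoc, ← Int.cast_mul, Int.units_coe_mul_self, Int.cast_one,
    one_mul]

end AlternatingSums

lemma eForm_apply {k : ℕ} (idx : Fin k → Fin 7) (v : Fin k → V7) :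
    eForm idx v = (Matrix.of fun i j => v i (idx j)).det := rfl

-- The left side is `s.sum f`, not `∑ c ∈ s, f c`: for sums over all permutations of seven indices
-- the kernel then compares the two terms syntactically instead of enumerating the permutations.
lemma alternatingMap_sum_apply {R M N ι γ : Type*} [CommSemiring R] [AddCommMonoid M] [Module R M]
    [AddCommMonoid N] [Module R N] (s : Finset γ) (f : γ → M [⋀^ι]→ₗ[R] N) (v : ι → M) :
    s.sum f v = ∑ c ∈ s, f c v :=
  map_sum (⟨⟨fun g => g v, rfl⟩, fun _ _ => rfl⟩ : (M [⋀^ι]→ₗ[R] N) →+ N) f s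

lemma contr2_apply {l : ℕ} (a : Matrix (Fin 7) (Fin 7) ℝ)
    (α : AlternatingMap ℝ V7 ℝ (Fin (l + 2))) (x : Fin l → V7) :
    contr2 a α x =
      (1 / 2 : ℝ) * ∑ i, ∑ j, a i j * α (Matrix.vecCons (e7 i) (Matrix.vecCons (e7 j) x)) := by
  simp [contr2, alternatingMap_sum_apply]

section HodgeStar

variable {p q : ℕ} (h : p + q = 7)

/-- The splitting of the seven indices into the first `p` and the last `q`. -/
def headTail : Fin p ⊕ Fin q ≃ Fin 7 := finSumFinEquiv.trans (finCongr h)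

/-- The Euclidean Hodge star of a `p`-form `α` on `ℝ⁷`, in coordinates. The usual sum of
`α (e_{σ1}, …, e_{σp}) e^{σ(p+1)} ∧ ⋯ ∧ e^{σ7}` over permutations carries the factor `1 / (p! q!)`;
here the `q!` terms of each wedge product have been merged, leaving `1 / p!` and plain products.
`α` is a function so that `phiWedgeEval β` can be inserted. -/
def hodgeStar (α : (Fin p → V7) → ℝ) (x : Fin q → V7) : ℝ :=
  (p.factorial : ℝ)⁻¹ * ∑ σ : Equiv.Perm (Fin 7), ((Equiv.Perm.sign σ : ℤ) : ℝ) *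
    (α (fun i => e7 (σ (headTail h (Sum.inl i)))) * ∏ j, x j (σ (headTail h (Sum.inr j))))

lemma hodgeStar_add (α α' : (Fin p → V7) → ℝ) :
    hodgeStar h (α + α') = hodgeStar h α + hodgeStar h α' := by
  ext x
  simp only [hodgeStar, Pi.add_apply, add_mul, mul_add, Finset.sum_add_distrib]

lemma hodgeStar_sub (α α' : (Fin p → V7) → ℝ) :
    hodgeStar h (α - α') = hodgeStar h α - hodgeStar h α' := by
  ext x
  simp only [hodgeStar, Pi.sub_apply, sub_mul, mul_sub, Finset.sum_sub_distrib]

lemma hodgeStar_eForm (ρ : Equiv.Perm (Fin 7)) :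
    hodgeStar h (eForm fun i => ρ (headTail h (Sum.inl i))) =
      ((Equiv.Perm.sign ρ : ℤ) : ℝ) • ⇑(eForm fun j => ρ (headTail h (Sum.inr j))) := by
  ext x
  have expand (u : Fin p → Fin 7) :
      eForm (fun i => ρ (headTail h (Sum.inl i))) (fun i => e7 (u i)) =
        ∑ τ : Equiv.Perm (Fin p), ((Equiv.Perm.sign τ : ℤ) : ℝ) *
          ∏ i, e7 (u (τ i)) (ρ (headTail h (Sum.inl i))) := by
    rw [eForm_apply, Matrix.det_apply']
    rfl
  have collapse := sum_sign_mul_alternating_inl (headTail h)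
    (fun u => ∏ i, e7 (u i) (ρ (headTail h (Sum.inl i)))) fun u => ∏ j, x j (u j)
  simp only [Fintype.card_fin, e7, sum_sign_mul_prod_single_mul_prod] at collapse
  simp only [hodgeStar, expand]
  simp only [e7, collapse]
  rw [inv_mul_cancel_left₀ (by positivity)]
  rfl

lemma hodgeStar_eForm_of_bijective {w : Fin 7 → Fin 7} (hw : Function.Bijective w)
    (even : Equiv.Perm.sign (Equiv.ofBijective w hw) = 1) :
    hodgeStar h (eForm fun i => w (headTail h (Sum.inl i))) =
      eForm fun j => w (headTail h (Sum.inr j)) := by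
  have star := hodgeStar_eForm h (Equiv.ofBijective w hw)
  rwa [even, Units.val_one, Int.cast_one, one_smul] at star

end HodgeStar

lemma contr2_apply_of_eq_hodgeStar {p l : ℕ} (h : p + (l + 2) = 7) (α : (Fin p → V7) → ℝ)
    (γ : AlternatingMap ℝ V7 ℝ (Fin (l + 2))) (hγ : ∀ y, γ y = hodgeStar h α y)
    (a : Matrix (Fin 7) (Fin 7) ℝ) (x : Fin l → V7) :
    contr2 a γ x = (2 * p.factorial : ℝ)⁻¹ * ∑ σ : Equiv.Perm (Fin 7),
      ((Equiv.Perm.sign σ : ℤ) : ℝ) * (α (fun i => e7 (σ (headTail h (Sum.inl i)))) *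
        (a (σ (headTail h (Sum.inr 0))) (σ (headTail h (Sum.inr 1))) *
        ∏ j : Fin l, x j (σ (headTail h (Sum.inr j.succ.succ))))) := by
  have pick (r s : Fin 7) : a r s = ∑ i, ∑ j, a i j * (e7 i r * e7 j s) := by
    simp [e7, Pi.single_apply]
  simp only [contr2_apply, hγ, hodgeStar, Fin.prod_univ_succ, Matrix.cons_val_zero,
    Matrix.cons_val_succ, Finset.mul_sum]
  rw [Finset.sum_congr rfl fun i _ => Finset.sum_comm, Finset.sum_comm]
  refine Finset.sum_congr rfl fun σ _ => ?_
  rw [pick (σ (headTail h (Sum.inr 0)))]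
  simp only [Finset.sum_mul, Finset.mul_sum, Fin.succ_zero_eq_one]
  refine Finset.sum_congr rfl fun i _ => Finset.sum_congr rfl fun j _ => ?_
  field_simp

lemma hodgeStar_phi0 : hodgeStar (p := 3) (q := 4) rfl phi0 = psi0 := by
  have star (w : Fin 7 → Fin 7) (hw : Function.Bijective w)
      (even : Equiv.Perm.sign (Equiv.ofBijective w hw) = 1) :
      hodgeStar (p := 3) (q := 4) rfl (eForm ![w 0, w 1, w 2]) =
        eForm ![w 3, w 4, w 5, w 6] := by
    have head : (![w 0, w 1, w 2] : Fin 3 → Fin 7) =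
        fun i => w (headTail (p := 3) (q := 4) rfl (Sum.inl i)) := by
      ext i
      fin_cases i <;> rfl
    have tail : (![w 3, w 4, w 5, w 6] : Fin 4 → Fin 7) =
        fun j => w (headTail (p := 3) (q := 4) rfl (Sum.inr j)) := by
      ext j
      fin_cases j <;> rfl
    rw [head, tail, hodgeStar_eForm_of_bijective _ hw even]
  have s123 := star ![0, 1, 2, 3, 4, 5, 6] (by decide) (by decide +kernel)
  have s145 := star ![0, 3, 4, 1, 2, 5, 6] (by decide) (by decide +kernel)
  have s167 := star ![0, 5, 6, 1, 2, 3, 4] (by decide) (by decide +kernel)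
  have s246 := star ![1, 3, 5, 0, 2, 4, 6] (by decide) (by decide +kernel)
  have s257 := star ![1, 4, 6, 0, 2, 3, 5] (by decide) (by decide +kernel)
  have s347 := star ![2, 3, 6, 0, 1, 4, 5] (by decide) (by decide +kernel)
  have s356 := star ![2, 4, 5, 0, 1, 3, 6] (by decide) (by decide +kernel)
  have coe_phi0 : ⇑phi0 = ⇑(eForm ![0, 1, 2]) + ⇑(eForm ![0, 3, 4]) + ⇑(eForm ![0, 5, 6])
      + ⇑(eForm ![1, 3, 5]) - ⇑(eForm ![1, 4, 6]) - ⇑(eForm ![2, 3, 6]) - ⇑(eForm ![2, 4, 5]) :=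
    rfl
  rw [coe_phi0]
  simp only [hodgeStar_add, hodgeStar_sub]
  exact congr($s123 + $s145 + $s167 + $s246 - $s257 - $s347 - $s356)

lemma hodgeStar_eq_sum_eForm {p q : ℕ} (h : p + q = 7) (α : (Fin p → V7) → ℝ) (x : Fin q → V7) :
    hodgeStar h α x = (p.factorial * q.factorial : ℝ)⁻¹ * ∑ σ : Equiv.Perm (Fin 7),
      ((Equiv.Perm.sign σ : ℤ) : ℝ) * (α (fun i => e7 (σ (headTail h (Sum.inl i)))) *
        eForm (fun j => σ (headTail h (Sum.inr j))) x) := by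
  have leibniz (u : Fin q → Fin 7) : eForm u x =
      ∑ τ : Equiv.Perm (Fin q), ((Equiv.Perm.sign τ : ℤ) : ℝ) * ∏ j, x j (u (τ j)) := by
    rw [eForm_apply, ← Matrix.det_transpose, Matrix.det_apply']
    rfl
  have collapse := sum_sign_mul_alternating_inr (headTail h) (fun u => α fun i => e7 (u i))
    fun u => ∏ j, x j (u j)
  rw [Fintype.card_fin] at collapse
  simp only [leibniz, collapse, hodgeStar]
  field_simp

lemma starPhiWedge_apply (β : AlternatingMap ℝ V7 ℝ (Fin 2)) (x : Fin 2 → V7) :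
    starPhiWedge β x = hodgeStar (p := 5) (q := 2) rfl (phiWedgeEval β) x := by
  rw [starPhiWedge, hodgeStar_eq_sum_eForm, AlternatingMap.smul_apply, alternatingMap_sum_apply,
    smul_eq_mul]
  have tail (σ : Equiv.Perm (Fin 7)) : (![σ 5, σ 6] : Fin 2 → Fin 7) =
      fun j => σ (headTail (p := 5) (q := 2) rfl (Sum.inr j)) := by
    ext j
    fin_cases j <;> rfl
  congr 1
  · norm_num [Nat.factorial]
  · refine Finset.sum_congr rfl fun σ _ => ?_
    rw [tail, AlternatingMap.smul_apply, smul_eq_mul, mul_assoc]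
    rfl

lemma starPhiWedge_apply_eq_sum (β : AlternatingMap ℝ V7 ℝ (Fin 2)) (x : Fin 2 → V7) :
    starPhiWedge β x = (12 : ℝ)⁻¹ * ∑ σ : Equiv.Perm (Fin 7), ((Equiv.Perm.sign σ : ℤ) : ℝ) *
      (phi0 ![e7 (σ 0), e7 (σ 1), e7 (σ 2)] * β ![e7 (σ 3), e7 (σ 4)] *
        (x 0 (σ 5) * x 1 (σ 6))) := by
  let A (u : Fin 5 → Fin 7) : ℝ := phi0 ![e7 (u 0), e7 (u 1), e7 (u 2)] * β ![e7 (u 3), e7 (u 4)]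
  have wedge (u : Fin 5 → Fin 7) : phiWedgeEval β (fun i => e7 (u i)) =
      (12 : ℝ)⁻¹ * ∑ τ : Equiv.Perm (Fin 5), ((Equiv.Perm.sign τ : ℤ) : ℝ) * A (u ∘ τ) := by
    simp only [phiWedgeEval, A, one_div, mul_assoc, Function.comp_apply]
  have collapse := sum_sign_mul_alternating_inl (headTail (p := 5) (q := 2) rfl) A
    fun u => ∏ j, x j (u j)
  rw [Fintype.card_fin] at collapse
  calc starPhiWedge β x
      = (Nat.factorial 5 : ℝ)⁻¹ * ((12 : ℝ)⁻¹ * ∑ σ : Equiv.Perm (Fin 7),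
          ((Equiv.Perm.sign σ : ℤ) : ℝ) *
            ((∑ τ : Equiv.Perm (Fin 5), ((Equiv.Perm.sign τ : ℤ) : ℝ) *
              A fun i => σ (headTail rfl (Sum.inl (τ i)))) *
              ∏ j, x j (σ (headTail rfl (Sum.inr j))))) := by
        rw [starPhiWedge_apply, hodgeStar, Finset.mul_sum _ _ (12⁻¹ : ℝ)]
        congr 1
        refine Finset.sum_congr rfl fun σ _ => ?_
        rw [wedge, mul_assoc (12⁻¹ : ℝ), mul_left_comm _ (12⁻¹ : ℝ)]
        rfl
    _ = _ := by
        rw [collapse, mul_left_comm, inv_mul_cancel_left₀ (by positivity)]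
        refine congrArg _ (Finset.sum_congr rfl fun σ _ => ?_)
        rw [Fin.prod_univ_two]
        rfl

lemma starPhiWedge_eq_contr2_sharp2 (β : AlternatingMap ℝ V7 ℝ (Fin 2)) :
    starPhiWedge β = contr2 (sharp2 β) psi0 := by
  ext x
  rw [starPhiWedge_apply_eq_sum, contr2_apply_of_eq_hodgeStar (p := 3) rfl phi0 psi0
    (fun y => (congrFun hodgeStar_phi0 y).symm)]
  have head (σ : Equiv.Perm (Fin 7)) : (![e7 (σ 0), e7 (σ 1), e7 (σ 2)] : Fin 3 → V7) =
      fun i => e7 (σ (headTail (p := 3) (q := 4) rfl (Sum.inl i))) := by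
    ext i
    fin_cases i <;> rfl
  congr 1
  · norm_num [Nat.factorial]
  · simp only [← head, mul_assoc, Fin.prod_univ_two]
    rfl

lemma eForm_two (a b : Fin 7) (x y : V7) : eForm ![a, b] ![x, y] = x a * y b - x b * y a :=
  Matrix.det_fin_two _

lemma eForm_three (a b c : Fin 7) (x y z : V7) : eForm ![a, b, c] ![x, y, z] =
    x a * y b * z c - x a * y c * z b - x b * y a * z c + x b * y c * z a + x c * y a * z b -
      x c * y b * z a :=
  Matrix.det_fin_three _

lemma eForm_vecCons {k : ℕ} (idx : Fin (k + 1) → Fin 7) (x : V7) (v : Fin k → V7) :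
    eForm idx (Matrix.vecCons x v) =
      ∑ i : Fin (k + 1), (-1) ^ (i : ℕ) * x (idx i) * eForm (idx ∘ i.succAbove) v :=
  Matrix.det_succ_row_zero _

lemma eForm_four (a b c d : Fin 7) (x y z w : V7) : eForm ![a, b, c, d] ![x, y, z, w] =
    x a * eForm ![b, c, d] ![y, z, w] - x b * eForm ![a, c, d] ![y, z, w]
      + x c * eForm ![a, b, d] ![y, z, w] - x d * eForm ![a, b, c] ![y, z, w] := by
  have omit_zero : ![a, b, c, d] ∘ Fin.succAbove 0 = ![b, c, d] := by
    ext i; fin_cases i <;> rfl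
  have omit_one : ![a, b, c, d] ∘ Fin.succAbove 1 = ![a, c, d] := by
    ext i; fin_cases i <;> rfl
  have omit_two : ![a, b, c, d] ∘ Fin.succAbove 2 = ![a, b, d] := by
    ext i; fin_cases i <;> rfl
  have omit_three : ![a, b, c, d] ∘ Fin.succAbove 3 = ![a, b, c] := by
    ext i; fin_cases i <;> rfl
  rw [eForm_vecCons, Fin.sum_univ_four, omit_zero, omit_one, omit_two, omit_three]
  change (-1) ^ 0 * x a * _ + (-1) ^ 1 * x b * _ + (-1) ^ 2 * x c * _ + (-1) ^ 3 * x d * _ = _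
  ring

lemma phi0_cyclic (x y z : V7) : phi0 ![x, y, z] = phi0 ![y, z, x] := by
  simp only [phi0, AlternatingMap.add_apply, AlternatingMap.sub_apply, eForm_three]
  ring

/-- The cross product of imaginary octonions: the vector dual to `φ₀ (x, y, ·)`. -/
def g2Cross (x y : V7) : V7 := fun k => phi0 ![x, y, e7 k]

lemma g2Cross_dotProduct (x y z : V7) : g2Cross x y ⬝ᵥ z = phi0 ![x, y, z] := by
  simp only [dotProduct, Fin.sum_univ_seven, g2Cross, phi0, AlternatingMap.sub_apply,
    AlternatingMap.add_apply, eForm_three, e7, Pi.single_apply, Fin.reduceEq, ↓reduceIte,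
    zero_ne_one, one_ne_zero]
  ring

lemma g2Cross_dotProduct_g2Cross (x y z w : V7) : g2Cross x y ⬝ᵥ g2Cross z w =
    (x ⬝ᵥ z) * (y ⬝ᵥ w) - (x ⬝ᵥ w) * (y ⬝ᵥ z) + psi0 ![x, y, z, w] := by
  simp only [dotProduct, Fin.sum_univ_seven, g2Cross, phi0, psi0, eForm_three, e7, eForm_four,
    AlternatingMap.add_apply, AlternatingMap.sub_apply, Pi.single_apply,
    Fin.reduceEq, ↓reduceIte, zero_ne_one, one_ne_zero, mul_zero, mul_one, sub_self, zero_sub,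
    sub_zero, add_zero, zero_add]
  ring

lemma sum_g2Cross_dotProduct_g2Cross (x z : V7) :
    ∑ i, g2Cross x (e7 i) ⬝ᵥ g2Cross z (e7 i) = 6 * (x ⬝ᵥ z) := by
  have psi0_repeated (i : Fin 7) : psi0 ![x, e7 i, z, e7 i] = 0 :=
    psi0.map_eq_zero_of_eq _ (i := 1) (j := 3) rfl (by decide)
  simp only [g2Cross_dotProduct_g2Cross, psi0_repeated, add_zero, Finset.sum_sub_distrib]
  have parseval : ∑ i, x ⬝ᵥ e7 i * (e7 i ⬝ᵥ z) = x ⬝ᵥ z := by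
    simp only [e7, dotProduct_single_one, single_one_dotProduct]
    rfl
  have unit (i : Fin 7) : e7 i ⬝ᵥ e7 i = 1 := by simp [e7]
  simp only [parseval, unit, mul_one, Finset.sum_const, Finset.card_univ, Fintype.card_fin,
    nsmul_eq_mul, Nat.cast_ofNat]
  ring

/-- The vector dual to the 1-form `β♯ ⌟ φ₀`; its kernel is `Λ²₁₄`, and it restricts to an
isomorphism `Λ²₇ ≃ ℝ⁷`. -/
def g2Vector : AlternatingMap ℝ V7 ℝ (Fin 2) →ₗ[ℝ] V7 where
  toFun β := (1 / 2 : ℝ) • ∑ i, ∑ j, β ![e7 i, e7 j] • g2Cross (e7 i) (e7 j)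
  map_add' β γ := by
    simp only [AlternatingMap.add_apply, add_smul, Finset.sum_add_distrib, smul_add]
  map_smul' c β := by
    simp only [AlternatingMap.smul_apply, smul_eq_mul, mul_smul, ← Finset.smul_sum,
      RingHom.id_apply]
    rw [smul_comm]

lemma g2Vector_dotProduct (β : AlternatingMap ℝ V7 ℝ (Fin 2)) (x : V7) :
    g2Vector β ⬝ᵥ x =
      (1 / 2 : ℝ) * ∑ i, ∑ j, β ![e7 i, e7 j] * (g2Cross (e7 i) (e7 j) ⬝ᵥ x) := by
  simp only [g2Vector, LinearMap.coe_mk, AddHom.coe_mk, smul_dotProduct,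
    sum_dotProduct, smul_eq_mul]

lemma g2Vector_curryLeft_phi0 (v : V7) : g2Vector (phi0.curryLeft v) = (3 : ℝ) • v := by
  refine dotProduct_eq _ _ fun x => ?_
  have trace (i : Fin 7) : ∑ j, phi0.curryLeft v ![e7 i, e7 j] * (g2Cross (e7 i) (e7 j) ⬝ᵥ x) =
      g2Cross v (e7 i) ⬝ᵥ g2Cross x (e7 i) := by
    refine Finset.sum_congr rfl fun j _ => ?_
    rw [g2Cross_dotProduct, ← phi0_cyclic]
    rfl
  rw [g2Vector_dotProduct, Finset.sum_congr rfl fun i _ => trace i,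
    sum_g2Cross_dotProduct_g2Cross, smul_dotProduct, smul_eq_mul]
  ring

lemma sharp2_injective : Function.Injective sharp2 := by
  intro β γ h
  refine Module.Basis.ext_alternating (Pi.basisFun ℝ (Fin 7)) fun v _ => ?_
  have entry := congrFun₂ h (v 0) (v 1)
  simp only [sharp2, Matrix.of_apply] at entry
  convert entry using 2 <;> ext i <;> fin_cases i <;> simp [e7]

lemma isLinearMap_sharp2 : IsLinearMap ℝ sharp2 := ⟨fun _ _ => rfl, fun _ _ => rfl⟩

lemma sharp2_mem_skew7 (β : AlternatingMap ℝ V7 ℝ (Fin 2)) : sharp2 β ∈ skew7 := by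
  refine Matrix.ext fun i j => ?_
  have swap : ![e7 i, e7 j] ∘ Equiv.swap 0 1 = ![e7 j, e7 i] := by
    ext k
    fin_cases k <;> rfl
  have alternating := β.map_swap ![e7 i, e7 j] zero_ne_one
  rwa [swap] at alternating

lemma exists_sharp2_eq {a : Matrix (Fin 7) (Fin 7) ℝ} (ha : a ∈ skew7) :
    ∃ β, sharp2 β = a := by
  refine ⟨(1 / 2 : ℝ) • ∑ i, ∑ j, a i j • eForm ![i, j], Matrix.ext fun r s => ?_⟩
  have skew : a s r = -a r s := congrFun₂ ha r s
  have coeff : ∑ i, ∑ j, a i j * eForm ![i, j] ![e7 r, e7 s] = a r s - a s r := by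
    simp only [eForm_two, mul_sub, Finset.sum_sub_distrib]
    simp [e7, Pi.single_apply]
  simp only [sharp2, Matrix.of_apply, AlternatingMap.smul_apply, alternatingMap_sum_apply,
    smul_eq_mul, coeff, skew]
  ring

lemma sharp2_bijective :
    Function.Bijective fun β => (⟨sharp2 β, sharp2_mem_skew7 β⟩ : skew7) :=
  ⟨fun _ _ h => sharp2_injective (congrArg Subtype.val h),
    fun a => (exists_sharp2_eq a.2).imp fun _ => Subtype.ext⟩

lemma starPhiWedge_eq_curryLeft_sub (β : AlternatingMap ℝ V7 ℝ (Fin 2)) :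
    starPhiWedge β = phi0.curryLeft (g2Vector β) - β := by
  refine sharp2_injective (Matrix.ext fun a b => ?_)
  have skew : β ![e7 b, e7 a] = -β ![e7 a, e7 b] := congrFun₂ (sharp2_mem_skew7 β) a b
  have contraction : phi0.curryLeft (g2Vector β) ![e7 a, e7 b] =
      g2Vector β ⬝ᵥ g2Cross (e7 a) (e7 b) := by
    rw [dotProduct_comm, g2Cross_dotProduct, ← phi0_cyclic]
    rfl
  simp only [sharp2, Matrix.of_apply, AlternatingMap.sub_apply, contraction,
    g2Vector_dotProduct, g2Cross_dotProduct_g2Cross]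
  rw [starPhiWedge_eq_contr2_sharp2, contr2_apply]
  have pick : ∑ i, ∑ j, β ![e7 i, e7 j] * ((e7 i ⬝ᵥ e7 a) * (e7 j ⬝ᵥ e7 b) -
      (e7 i ⬝ᵥ e7 b) * (e7 j ⬝ᵥ e7 a)) = β ![e7 a, e7 b] - β ![e7 b, e7 a] := by
    simp [e7, Pi.single_apply, mul_sub]
  simp only [mul_add, Finset.sum_add_distrib, pick, skew, sharp2, Matrix.of_apply]
  ring

lemma isLinearMap_starPhiWedge : IsLinearMap ℝ starPhiWedge where
  map_add β γ := by
    simp only [starPhiWedge_eq_curryLeft_sub, map_add]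
    module
  map_smul c β := by
    simp only [starPhiWedge_eq_curryLeft_sub, map_smul]
    module

lemma starPhiWedge_starPhiWedge (β : AlternatingMap ℝ V7 ℝ (Fin 2)) :
    starPhiWedge (starPhiWedge β) = starPhiWedge β + (2 : ℝ) • β := by
  have vector : g2Vector (starPhiWedge β) = (2 : ℝ) • g2Vector β := by
    rw [starPhiWedge_eq_curryLeft_sub, map_sub, g2Vector_curryLeft_phi0]
    module
  rw [starPhiWedge_eq_curryLeft_sub (starPhiWedge β), vector, map_smul,
    starPhiWedge_eq_curryLeft_sub]
  module

lemma starPhiWedge_bijective : Function.Bijective starPhiWedge := by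
  refine Function.bijective_iff_has_inverse.2
    ⟨fun β => (1 / 2 : ℝ) • (starPhiWedge β - β), fun β => ?_, fun β => ?_⟩
  · simp only [starPhiWedge_starPhiWedge]
    module
  · simp only [isLinearMap_starPhiWedge.map_smul, isLinearMap_starPhiWedge.map_sub,
      starPhiWedge_starPhiWedge]
    module

lemma contr2_psi0_bijective :
    Function.Bijective fun a : skew7 => contr2 (a : Matrix (Fin 7) (Fin 7) ℝ) psi0 := by
  rw [← Function.Bijective.of_comp_iff _ sharp2_bijective]
  convert starPhiWedge_bijective using 1
  exact funext fun β => (starPhiWedge_eq_contr2_sharp2 β).symm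

lemma exists_starPhiWedge_eigenform_decomposition (β : AlternatingMap ℝ V7 ℝ (Fin 2)) :
    ∃ β₇ β₁₄ : AlternatingMap ℝ V7 ℝ (Fin 2),
      starPhiWedge β₇ = (2 : ℝ) • β₇ ∧ starPhiWedge β₁₄ = -β₁₄ ∧ β = β₇ + β₁₄ := by
  refine ⟨(1 / 3 : ℝ) • (starPhiWedge β + β), (1 / 3 : ℝ) • ((2 : ℝ) • β - starPhiWedge β),
    ?_, ?_, by module⟩ <;>
  · simp only [isLinearMap_starPhiWedge.map_smul, isLinearMap_starPhiWedge.map_add,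
      isLinearMap_starPhiWedge.map_sub, starPhiWedge_starPhiWedge]
    module

lemma contr2_sharp2_eigenforms_psi0 {β₇ β₁₄ : AlternatingMap ℝ V7 ℝ (Fin 2)}
    (h₇ : starPhiWedge β₇ = (2 : ℝ) • β₇) (h₁₄ : starPhiWedge β₁₄ = -β₁₄) :
    contr2 ((1 / 2 : ℝ) • sharp2 β₇ - sharp2 β₁₄) psi0 = β₇ + β₁₄ := by
  rw [← isLinearMap_sharp2.map_smul, ← isLinearMap_sharp2.map_sub, ← starPhiWedge_eq_contr2_sharp2,
    isLinearMap_starPhiWedge.map_sub, isLinearMap_starPhiWedge.map_smul, h₇, h₁₄]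
  module

/-- The contraction map `Λ²(ℝ⁷) → Λ²((ℝ⁷)*)`, `Q ↦ Q ⌟ ⋆φ₀`, is a bijection; moreover,
writing any 2-form `β` as `β = β₇ + β₁₄` with `β₇ ∈ Λ²₇ = {β : ⋆(φ₀ ∧ β) = 2β}` and
`β₁₄ ∈ Λ²₁₄ = {β : ⋆(φ₀ ∧ β) = −β}` (such a decomposition always exists), one has
`β = ((1/2) β₇♯ − β₁₄♯) ⌟ ⋆φ₀`. -/
theorem contraction_psi0_bijective_and_decomposition :
    (Function.Bijective fun a : skew7 => contr2 (a : Matrix (Fin 7) (Fin 7) ℝ) psi0) ∧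
    (∀ β : AlternatingMap ℝ V7 ℝ (Fin 2),
      ∃ β₇ β₁₄ : AlternatingMap ℝ V7 ℝ (Fin 2),
        starPhiWedge β₇ = (2 : ℝ) • β₇ ∧ starPhiWedge β₁₄ = -β₁₄ ∧ β = β₇ + β₁₄) ∧
    (∀ β β₇ β₁₄ : AlternatingMap ℝ V7 ℝ (Fin 2),
      starPhiWedge β₇ = (2 : ℝ) • β₇ → starPhiWedge β₁₄ = -β₁₄ → β = β₇ + β₁₄ →
        β = contr2 ((1 / 2 : ℝ) • sharp2 β₇ - sharp2 β₁₄) psi0) := by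
  exact ⟨contr2_psi0_bijective, exists_starPhiWedge_eigenform_decomposition,
    fun _ _ _ h₇ h₁₄ sum => sum.trans (contr2_sharp2_eigenforms_psi0 h₇ h₁₄).symm⟩

end
end
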